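/- There are exactly 28 conjugacy classes of finite-index subgroups Γ̄ of PSL(2,ℤ) that have genus zero and satisfy n + 3·e₂(Γ̄) + 2·e₃(Γ̄) = 12, where n is the index of Γ̄. Among these 28 classes: exactly 6 are torsion-free; exactly 14 satisfy e₂(Γ̄) > 0; exactly 4 satisfy e₂(Γ̄) = 0 and e₃(Γ̄) = 1; exactly 3 satisfy e₂(Γ̄) = 0 and e₃(Γ̄) = 2; and exactly 1 satisfies e₂(Γ̄) = 0 and e₃(Γ̄) = 3. -/

import Mathlib

open Matrix

/-- `SL(2,ℤ)`: the group of 2×2 integer matrices of determinant 1. -/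
abbrev SL2Z := Matrix.SpecialLinearGroup (Fin 2) ℤ

instance : Fact (Even (Fintype.card (Fin 2))) := ⟨by simp⟩

/-- The subgroup `{±I}` of `SL(2,ℤ)`. -/
def pmOne : Subgroup SL2Z := Subgroup.zpowers (-1 : SL2Z)

instance : pmOne.Normal := by
  constructor
  intro x hx g
  obtain ⟨n, rfl⟩ := hx
  have h : Commute ((-1 : SL2Z) ^ n) g := (Commute.neg_one_left g).zpow_left n
  refine ⟨n, ?_⟩
  rw [← h.eq, mul_assoc, mul_inv_cancel, mul_one]

/-- `PSL(2,ℤ)`, the modular group, as the quotient of `SL(2,ℤ)` by `{±I}`. -/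
abbrev PSL2Z := SL2Z ⧸ pmOne

/-- The natural projection `ξ : SL(2,ℤ) → PSL(2,ℤ)`. -/
def xi : SL2Z →* PSL2Z := QuotientGroup.mk' pmOne

/-- The element `S` of `PSL(2,ℤ)`, the image of `[[0,-1],[1,0]]`. -/
def Sp : PSL2Z := xi ⟨!![0, -1; 1, 0], by norm_num [Matrix.det_fin_two_of]⟩

/-- The element `T` of `PSL(2,ℤ)`, the image of `[[1,1],[0,1]]`. -/
def Tp : PSL2Z := xi ⟨!![1, 1; 0, 1], by norm_num [Matrix.det_fin_two_of]⟩

/-- The number of left cosets in `PSL(2,ℤ)/Γ` fixed by `g` (for the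
left-multiplication action).  For `g = S` this is `e₂(Γ)`, for `g = S*T` it is `e₃(Γ)`. -/
noncomputable def nFix (g : PSL2Z) (Γ : Subgroup PSL2Z) : ℕ :=
  Nat.card {x : PSL2Z ⧸ Γ // g • x = x}

/-- The number of orbits of the cyclic subgroup generated by `g` on `PSL(2,ℤ)/Γ`.
For `g = S, S*T, T` these are `c₂(Γ), c₃(Γ), h(Γ)` respectively. -/
noncomputable def nOrb (g : PSL2Z) (Γ : Subgroup PSL2Z) : ℕ :=
  Nat.card (MulAction.orbitRel.Quotient (Subgroup.zpowers g) (PSL2Z ⧸ Γ))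

/-- `Γ` has genus zero: `c₂(Γ) + c₃(Γ) + h(Γ) = index(Γ) + 2`. -/
def GenusZero (Γ : Subgroup PSL2Z) : Prop :=
  nOrb Sp Γ + nOrb (Sp * Tp) Γ + nOrb Tp Γ = Γ.index + 2

/-- `Γ` is torsion free: it contains no nontrivial element of finite order. -/
def TorsionFree (Γ : Subgroup PSL2Z) : Prop :=
  ∀ x ∈ Γ, x ≠ 1 → ¬ IsOfFinOrder x

/-- Two subgroups of a group are conjugate. -/
def SubgroupConj {G : Type*} [Group G] (H K : Subgroup G) : Prop :=
  ∃ g : G, Subgroup.map (MulAut.conj g).toMonoidHom H = K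

/-- The number of conjugacy classes of subgroups of `PSL(2,ℤ)` satisfying `P`. -/
noncomputable def countClasses (P : Subgroup PSL2Z → Prop) : ℕ :=
  Nat.card (Quot fun A B : {Γ : Subgroup PSL2Z // P Γ} => SubgroupConj A.1 B.1)

/-- The index of the torsion free subgroup `Γ^tf` associated to `Γ`:
`index(Γ) + 3·e₂(Γ) + 2·e₃(Γ)`. -/
noncomputable def tfIdx (Γ : Subgroup PSL2Z) : ℕ :=
  Γ.index + 3 * nFix Sp Γ + 2 * nFix (Sp * Tp) Γ

/-! ### Normal forms in a group generated by an involution and an element of order three -/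

/-- Product of a list of letters `s*u` (`false`) and `s*u*u` (`true`). -/
def pw {G : Type*} [Group G] (s u : G) (L : List Bool) : G :=
  (L.map (fun b => if b then s * u * u else s * u)).prod

def Good {G : Type*} [Group G] (s u x : G) : Prop :=
  x = 1 ∨ x = s ∨ x = u ∨ x = u * u ∨ ∃ L, L ≠ [] ∧ x = pw s u L

section nf
variable {G : Type*} [Group G] {s u : G}

theorem pw_nil : pw s u [] = 1 := by simp [pw]

theorem pw_cons_f (L) : pw s u (false :: L) = s * u * pw s u L := by simp [pw]

theorem pw_cons_t (L) : pw s u (true :: L) = s * u * u * pw s u L := by simp [pw]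

theorem pw_append (L M) : pw s u (L ++ M) = pw s u L * pw s u M := by simp [pw]

theorem pw_single_f : pw s u [false] = s * u := by simp [pw]

theorem pw_single_t : pw s u [true] = s * u * u := by simp [pw]

/-- Left multiplication by a generator preserves the normal form. -/
theorem nf_step_u (hu : u * u * u = 1) (g : G)
    (h : ∃ L, ∃ b, (b = 1 ∨ b = s) ∧
      (g = pw s u L * b ∨ g = u * pw s u L * b ∨ g = u * u * pw s u L * b)) :
    ∃ L, ∃ b, (b = 1 ∨ b = s) ∧
      (u * g = pw s u L * b ∨ u * g = u * pw s u L * b ∨ u * g = u * u * pw s u L * b) := by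
  obtain ⟨L, b, hb, h⟩ := h
  refine ⟨L, b, hb, ?_⟩
  rcases h with rfl | rfl | rfl
  · right; left; group
  · right; right; group
  · left
    calc u * (u * u * pw s u L * b) = (u * u * u) * (pw s u L * b) := by group
      _ = _ := by rw [hu, one_mul]

theorem nf_step_s (hs : s * s = 1) (g : G)
    (h : ∃ L, ∃ b, (b = 1 ∨ b = s) ∧
      (g = pw s u L * b ∨ g = u * pw s u L * b ∨ g = u * u * pw s u L * b)) :
    ∃ L, ∃ b, (b = 1 ∨ b = s) ∧
      (s * g = pw s u L * b ∨ s * g = u * pw s u L * b ∨ s * g = u * u * pw s u L * b) := by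
  obtain ⟨L, b, hb, h⟩ := h
  rcases h with rfl | rfl | rfl
  · rcases L with _ | ⟨_ | _, L⟩
    · rcases hb with rfl | rfl
      · exact ⟨[], s, Or.inr rfl, Or.inl (by simp [pw_nil])⟩
      · exact ⟨[], 1, Or.inl rfl, Or.inl (by simp [pw_nil, hs])⟩
    · refine ⟨L, b, hb, Or.inr (Or.inl ?_)⟩
      rw [pw_cons_f]
      calc s * (s * u * pw s u L * b) = (s * s) * (u * pw s u L * b) := by group
        _ = _ := by rw [hs, one_mul]
    · refine ⟨L, b, hb, Or.inr (Or.inr ?_)⟩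
      rw [pw_cons_t]
      calc s * (s * u * u * pw s u L * b) = (s * s) * (u * u * pw s u L * b) := by group
        _ = _ := by rw [hs, one_mul]
  · exact ⟨false :: L, b, hb, Or.inl (by rw [pw_cons_f]; group)⟩
  · exact ⟨true :: L, b, hb, Or.inl (by rw [pw_cons_t]; group)⟩

theorem nf_exists (hs : s * s = 1) (hu : u * u * u = 1) (g : G)
    (hg : g ∈ Subgroup.closure ({s, u} : Set G)) :
    ∃ L, ∃ b, (b = 1 ∨ b = s) ∧
      (g = pw s u L * b ∨ g = u * pw s u L * b ∨ g = u * u * pw s u L * b) := by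
  have hsi : s⁻¹ = s := inv_eq_of_mul_eq_one_left hs
  have hui : u⁻¹ = u * u := inv_eq_of_mul_eq_one_left hu
  induction hg using Subgroup.closure_induction_left with
  | one => exact ⟨[], 1, Or.inl rfl, Or.inl (by simp [pw_nil])⟩
  | mul_left x hx y hy ih =>
    rcases hx with rfl | rfl
    · exact nf_step_s hs _ ih
    · exact nf_step_u hu _ ih
  | inv_mul_cancel x hx y hy ih =>
    rcases hx with rfl | rfl
    · rw [hsi]; exact nf_step_s hs _ ih
    · rw [hui, mul_assoc]; exact nf_step_u hu _ (nf_step_u hu _ ih)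

/-- `g` is conjugate to a good element. -/
def CGood (s u g : G) : Prop := ∃ c : G, Good s u (c * g * c⁻¹)

theorem CGood.conj {g h : G} (c : G) (hc : h = c * g * c⁻¹) (hh : CGood s u h) :
    CGood s u g := by
  obtain ⟨d, hd⟩ := hh
  refine ⟨d * c, ?_⟩
  subst hc
  convert hd using 1
  group

theorem cgood_aux (hs : s * s = 1) (hu : u * u * u = 1) (k : ℕ) :
    ∀ L : List Bool, L.length = k →
      CGood s u (s * pw s u L) ∧ CGood s u (u * pw s u L) ∧ CGood s u (u * u * pw s u L) := by
  induction k with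
  | zero =>
    intro L hL
    obtain rfl := List.length_eq_zero_iff.mp hL
    refine ⟨⟨1, ?_⟩, ⟨1, ?_⟩, ⟨1, ?_⟩⟩ <;> simp [pw_nil, Good]
  | succ k ih =>
    intro L hL
    refine ⟨?_, ?_⟩
    · rcases L with _ | ⟨_ | _, L⟩
      · simp at hL
      · have := (ih L (by simpa using hL)).2.1
        convert this using 1
        rw [pw_cons_f]
        calc s * (s * u * pw s u L) = (s * s) * (u * pw s u L) := by group
          _ = _ := by rw [hs, one_mul]
      · have := (ih L (by simpa using hL)).2.2
        convert this using 1
        rw [pw_cons_t]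
        calc s * (s * u * u * pw s u L) = (s * s) * (u * u * pw s u L) := by group
          _ = _ := by rw [hs, one_mul]
    · rcases List.eq_nil_or_concat L with rfl | ⟨M, b, rfl⟩
      · simp at hL
      · have hM := ih M (by simpa using hL)
        rw [List.concat_eq_append, pw_append]
        cases b
        · rw [pw_single_f]
          constructor
          · refine ⟨u⁻¹, Or.inr (Or.inr (Or.inr (Or.inr ⟨M ++ [true], by simp, ?_⟩)))⟩
            rw [pw_append, pw_single_t]; group
          · refine CGood.conj (s * u⁻¹ * u⁻¹) ?_ hM.1
            calc s * pw s u M = s * pw s u M * (s * (u * u * u) * s⁻¹) := by rw [hu]; group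
              _ = _ := by simp [mul_assoc]
        · rw [pw_single_t]
          constructor
          · refine CGood.conj (s * u⁻¹) ?_ hM.1
            calc s * pw s u M = s * pw s u M * (s * (u * u * u) * s⁻¹) := by rw [hu]; group
              _ = _ := by simp [mul_assoc]
          · refine ⟨u⁻¹ * u⁻¹, Or.inr (Or.inr (Or.inr (Or.inr ⟨M ++ [false], by simp, ?_⟩)))⟩
            rw [pw_append, pw_single_f]
            calc _ = pw s u M * s * (u * u * u) * u := by simp [mul_assoc]
              _ = _ := by rw [hu]; group

theorem cgood (hs : s * s = 1) (hu : u * u * u = 1) (g : G)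
    (hg : g ∈ Subgroup.closure ({s, u} : Set G)) : CGood s u g := by
  obtain ⟨L, b, hb, h⟩ := nf_exists hs hu g hg
  have key := cgood_aux hs hu L.length L rfl
  have hsi : s⁻¹ = s := inv_eq_of_mul_eq_one_left hs
  rcases hb with rfl | rfl
  · rcases h with rfl | rfl | rfl
    · rcases L with _ | ⟨b, L⟩
      · exact ⟨1, by simp [pw_nil, Good]⟩
      · exact ⟨1, Or.inr (Or.inr (Or.inr (Or.inr ⟨b :: L, by simp, by simp⟩)))⟩
    · simpa using key.2.1
    · simpa using key.2.2
  · rcases h with rfl | rfl | rfl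
    · exact CGood.conj b (by group) key.1
    · exact ⟨b, Or.inr (Or.inr (Or.inr (Or.inr ⟨false :: L, by simp,
        by rw [pw_cons_f]; group⟩)))⟩
    · exact ⟨b, Or.inr (Or.inr (Or.inr (Or.inr ⟨true :: L, by simp,
        by rw [pw_cons_t]; group⟩)))⟩

end nf

/-! ### The modular group -/

/-- The element `S*T` of order three. -/
def Up : PSL2Z := Sp * Tp

theorem xi_eq_one_iff (M : SL2Z) : xi M = 1 ↔ M = 1 ∨ M = -1 := by
  rw [xi, QuotientGroup.mk'_apply, QuotientGroup.eq_one_iff, pmOne, Subgroup.mem_zpowers_iff]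
  constructor
  · rintro ⟨k, rfl⟩
    rcases Int.even_or_odd k with h | h
    · left; exact h.neg_one_zpow
    · right; exact h.neg_one_zpow
  · rintro (rfl | rfl)
    · exact ⟨0, by simp⟩
    · exact ⟨1, by simp⟩

theorem Sp_def : Sp = xi ModularGroup.S := rfl

theorem Tp_def : Tp = xi ModularGroup.T := rfl

theorem Sp_sq : Sp * Sp = 1 := by
  rw [Sp_def, ← map_mul, xi_eq_one_iff]
  right
  ext i j; fin_cases i <;> fin_cases j <;> simp [ModularGroup.coe_S]

theorem Up_cube : Up * Up * Up = 1 := by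
  rw [Up, Sp_def, Tp_def, ← map_mul, ← map_mul, ← map_mul, xi_eq_one_iff]
  right
  ext i j; fin_cases i <;> fin_cases j <;>
    simp [ModularGroup.coe_S, ModularGroup.coe_T]

theorem Sp_mul_Up : Sp * Up = Tp := by rw [Up, ← mul_assoc, Sp_sq, one_mul]

theorem closure_SU : Subgroup.closure ({Sp, Up} : Set PSL2Z) = ⊤ := by
  have h := congrArg (Subgroup.map xi) SpecialLinearGroup.SL2Z_generators
  rw [MonoidHom.map_closure, Subgroup.map_top_of_surjective xi
    (QuotientGroup.mk'_surjective pmOne)] at h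
  rw [eq_top_iff, ← h, Subgroup.closure_le]
  have hS : Sp ∈ Subgroup.closure ({Sp, Up} : Set PSL2Z) := Subgroup.subset_closure (by simp)
  have hU : Up ∈ Subgroup.closure ({Sp, Up} : Set PSL2Z) := Subgroup.subset_closure (by simp)
  rintro _ ⟨x, hx | hx, rfl⟩
  · rw [hx]; exact hS
  · rw [hx]
    change Tp ∈ Subgroup.closure ({Sp, Up} : Set PSL2Z)
    rw [← Sp_mul_Up]; exact mul_mem hS hU

/-- A nonnegative matrix with entry sum at least three. -/
def PosMat (M : SL2Z) : Prop :=
  0 ≤ M 0 0 ∧ 0 ≤ M 0 1 ∧ 0 ≤ M 1 0 ∧ 0 ≤ M 1 1 ∧ 3 ≤ M 0 0 + M 0 1 + M 1 0 + M 1 1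

theorem PosMat.ne {M : SL2Z} (h : PosMat M) : xi M ≠ 1 := by
  rw [Ne, xi_eq_one_iff]
  rintro (rfl | rfl) <;> simp [PosMat] at h

/-- The matrix `[[1,0],[1,1]]`. -/
def Lm : SL2Z := ModularGroup.T * ModularGroup.S * ModularGroup.T

theorem Lm_coe : (Lm : Matrix (Fin 2) (Fin 2) ℤ) = !![1, 0; 1, 1] := by
  ext i j; fin_cases i <;> fin_cases j <;>
    simp [Lm, ModularGroup.coe_S, ModularGroup.coe_T]

theorem pos_T : PosMat ModularGroup.T := by simp [PosMat, ModularGroup.T]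

theorem pos_L : PosMat Lm := by simp [PosMat, Lm_coe]

theorem pos_T_mul {M} (h : PosMat M) : PosMat (ModularGroup.T * M) := by
  obtain ⟨h1, h2, h3, h4, h5⟩ := h
  simp only [PosMat, Matrix.SpecialLinearGroup.coe_mul, Matrix.mul_apply, Fin.sum_univ_two,
    ModularGroup.coe_T]
  simp
  omega

theorem pos_L_mul {M} (h : PosMat M) : PosMat (Lm * M) := by
  obtain ⟨h1, h2, h3, h4, h5⟩ := h
  simp only [PosMat, Matrix.SpecialLinearGroup.coe_mul, Matrix.mul_apply, Fin.sum_univ_two,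
    Lm_coe]
  simp
  omega

theorem xi_L : Sp * Up * Up = xi Lm := by
  rw [Sp_mul_Up, Up, Lm, map_mul, map_mul, ← Sp_def, ← Tp_def, mul_assoc]

theorem pw_pos (L : List Bool) (hL : L ≠ []) : ∃ M, PosMat M ∧ pw Sp Up L = xi M := by
  induction L with
  | nil => exact absurd rfl hL
  | cons b L ih =>
    by_cases hL' : L = []
    · subst hL'
      cases b
      · exact ⟨_, pos_T, by rw [pw_single_f, Sp_mul_Up]; rfl⟩
      · exact ⟨_, pos_L, by rw [pw_single_t, xi_L]⟩
    · obtain ⟨M, hM, h⟩ := ih hL'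
      cases b
      · exact ⟨_, pos_T_mul hM, by rw [pw_cons_f, Sp_mul_Up, h, map_mul]; rfl⟩
      · exact ⟨_, pos_L_mul hM, by rw [pw_cons_t, xi_L, h, map_mul]⟩

theorem pw_ne_one (L : List Bool) (hL : L ≠ []) : pw Sp Up L ≠ 1 := by
  obtain ⟨M, hM, h⟩ := pw_pos L hL
  rw [h]; exact hM.ne

theorem pw_pow (L : List Bool) (hL : L ≠ []) (k : ℕ) :
    ∃ L', L' ≠ [] ∧ pw Sp Up L ^ (k + 1) = pw Sp Up L' := by
  induction k with
  | zero => exact ⟨L, hL, by simp⟩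
  | succ k ih =>
    obtain ⟨L', h1, h2⟩ := ih
    exact ⟨L' ++ L, by simp [h1], by rw [pow_succ, h2, pw_append]⟩

theorem Sp_ne : Sp ≠ 1 := by
  rw [Sp_def, Ne, xi_eq_one_iff]
  rintro (h | h) <;> have := congrArg (fun M : SL2Z => M 0 1) h <;> simp [ModularGroup.S] at this

theorem Up_ne : Up ≠ 1 := by
  rw [Up, Sp_def, Tp_def, ← map_mul, Ne, xi_eq_one_iff]
  rintro (h | h) <;> have := congrArg (fun M : SL2Z => M 0 1) h <;>
    simp [ModularGroup.coe_S, ModularGroup.coe_T] at this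

theorem UpUp_ne : Up * Up ≠ 1 := by
  intro h
  have := Up_cube
  rw [h, one_mul] at this
  exact Up_ne this

/-- Universal property of the modular group as a free product. -/
theorem exists_hom {G : Type*} [Group G] (s u : G) (hs : s * s = 1) (hu : u * u * u = 1) :
    ∃ f : PSL2Z →* G, f Sp = s ∧ f Up = u := by
  let K : Subgroup (PSL2Z × G) := Subgroup.closure {(Sp, s), (Up, u)}
  let π : K →* PSL2Z := (MonoidHom.fst PSL2Z G).comp K.subtype
  have hsK : ((Sp, s) : PSL2Z × G) ∈ K := Subgroup.subset_closure (by simp)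
  have huK : ((Up, u) : PSL2Z × G) ∈ K := Subgroup.subset_closure (by simp)
  have hmap : ∀ L, (pw ((Sp, s) : PSL2Z × G) (Up, u) L).1 = pw Sp Up L := by
    intro L
    induction L with
    | nil => simp [pw_nil]
    | cons b L ih => cases b <;> simp [pw_cons_f, pw_cons_t, ih]
  have hinj : Function.Injective π := by
    rw [injective_iff_map_eq_one]
    rintro ⟨k, hk⟩ h1
    have h1' : k.1 = 1 := h1
    obtain ⟨c, hc⟩ := cgood (s := ((Sp, s) : PSL2Z × G)) (u := (Up, u))
      (by ext <;> simp [Sp_sq, hs]) (by ext <;> simp [Up_cube, hu]) k hk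
    have hfst : (c * k * c⁻¹).1 = 1 := by simp [h1']
    have : c * k * c⁻¹ = 1 := by
      rcases hc with h | h | h | h | ⟨L, hL, h⟩
      · exact h
      · rw [h] at hfst; exact absurd hfst Sp_ne
      · rw [h] at hfst; exact absurd hfst Up_ne
      · rw [h] at hfst; exact absurd hfst UpUp_ne
      · rw [h, hmap] at hfst; exact absurd hfst (pw_ne_one L hL)
    ext1
    simpa using this
  have hsurj : Function.Surjective π := by
    rw [← MonoidHom.range_eq_top, eq_top_iff, ← closure_SU, Subgroup.closure_le]
    rintro x (rfl | rfl)
    · exact ⟨⟨_, hsK⟩, rfl⟩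
    · exact ⟨⟨_, huK⟩, rfl⟩
  let e := MulEquiv.ofBijective π ⟨hinj, hsurj⟩
  refine ⟨(MonoidHom.snd PSL2Z G).comp (K.subtype.comp e.symm.toMonoidHom), ?_, ?_⟩
  · have : e.symm Sp = ⟨_, hsK⟩ := by rw [MulEquiv.symm_apply_eq]; rfl
    simp [this]
  · have : e.symm Up = ⟨_, huK⟩ := by rw [MulEquiv.symm_apply_eq]; rfl
    simp [this]

/-- Torsion elements are conjugate to `S`, `U` or `U²`. -/
theorem torsion_conj (x : PSL2Z) (hx : x ≠ 1) (hf : IsOfFinOrder x) :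
    ∃ c : PSL2Z, c * x * c⁻¹ = Sp ∨ c * x * c⁻¹ = Up ∨ c * x * c⁻¹ = Up * Up := by
  obtain ⟨c, hc⟩ := cgood Sp_sq Up_cube x (by rw [closure_SU]; trivial)
  refine ⟨c, ?_⟩
  rcases hc with h | h | h | h | ⟨L, hL, h⟩
  · exact absurd (by simpa using h) hx
  · exact Or.inl h
  · exact Or.inr (Or.inl h)
  · exact Or.inr (Or.inr h)
  · exfalso
    obtain ⟨k, hk, hxk⟩ := isOfFinOrder_iff_pow_eq_one.mp hf
    obtain ⟨k, rfl⟩ := Nat.exists_eq_succ_of_ne_zero hk.ne'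
    obtain ⟨L', h1, h2⟩ := pw_pow L hL k
    rw [← h, conj_pow, hxk] at h2
    exact pw_ne_one L' h1 (by rw [← h2]; simp)

/-! ### Combinatorial models of coset actions -/

/-- Labelling `p` of the cosets by `0, …, n-1`, with `S`, `U` acting by `s`, `u`. -/
structure Model (Γ : Subgroup PSL2Z) (n : ℕ) (s u : ℕ → ℕ) (p : ℕ → PSL2Z ⧸ Γ) : Prop where
  npos : 0 < n
  inj : ∀ i < n, ∀ j < n, p i = p j → i = j
  surj : ∀ x, ∃ i < n, p i = x
  hs : ∀ i < n, s i < n ∧ Sp • p i = p (s i)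
  hu : ∀ i < n, u i < n ∧ Up • p i = p (u i)

/-- The function of a word in `s` (`false`) and `u` (`true`). -/
def wfun (s u : ℕ → ℕ) : List Bool → ℕ → ℕ
  | [], i => i
  | b :: w, i => bif b then u (wfun s u w i) else s (wfun s u w i)

/-- The element of a word. -/
def welt : List Bool → PSL2Z
  | [] => 1
  | b :: w => (bif b then Up else Sp) * welt w

/-- Evaluate a number before passing it on (this speeds up kernel computations). -/
def forceN {α : Type} (n : ℕ) (k : ℕ → α) : α := Nat.casesOn n (k 0) (fun m => k (Nat.succ m))

theorem forceN_eq {α : Type} (n : ℕ) (k : ℕ → α) : forceN n k = k n := by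
  cases n <;> rfl

/-- `i ≤ x, i ≤ f x, …` for `k` steps. -/
def orbMin (f : ℕ → ℕ) (i k : ℕ) : ℕ → Bool :=
  Nat.rec (fun _ => true) (fun _ ih x => cond (Nat.ble i x) (forceN (f x) ih) false) k

theorem orbMin_succ (f : ℕ → ℕ) (i k x : ℕ) :
    orbMin f i (k + 1) x = (Nat.ble i x && orbMin f i k (f x)) := by
  change cond (Nat.ble i x) (forceN (f x) (orbMin f i k)) false = _
  rw [forceN_eq]
  cases Nat.ble i x <;> rfl

theorem orbMin_iff (f : ℕ → ℕ) (i k x : ℕ) :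
    orbMin f i k x = true ↔ ∀ j < k, i ≤ f^[j] x := by
  induction k generalizing x with
  | zero => simp [orbMin]
  | succ k ih =>
    rw [orbMin_succ, Bool.and_eq_true, Nat.ble_eq, ih]
    constructor
    · rintro ⟨h1, h2⟩ j hj
      cases j with
      | zero => exact h1
      | succ j => exact h2 j (by omega)
    · intro h
      exact ⟨h 0 (by omega), fun j hj => h (j + 1) (by omega)⟩

/-- Number of orbits of `f` on `0, …, n-1`. -/
def orbCount (f : ℕ → ℕ) (n : ℕ) : ℕ := Nat.count (fun i => orbMin f i n i = true) n

namespace Model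
variable {Γ : Subgroup PSL2Z} {n : ℕ} {s u : ℕ → ℕ} {p : ℕ → PSL2Z ⧸ Γ}

theorem word (h : Model Γ n s u p) (w : List Bool) :
    ∀ i < n, wfun s u w i < n ∧ welt w • p i = p (wfun s u w i) := by
  intro i hi
  induction w with
  | nil => simp [wfun, welt, hi]
  | cons b w ih =>
    cases b
    · have := h.hs _ ih.1
      simp only [wfun, welt, cond_false, mul_smul, ih.2]
      exact this
    · have := h.hu _ ih.1
      simp only [wfun, welt, cond_true, mul_smul, ih.2]
      exact this

/-- The labelling as an equivalence. -/
theorem exists_equiv (h : Model Γ n s u p) : ∃ e : Fin n ≃ PSL2Z ⧸ Γ, ∀ i, e i = p i :=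
  ⟨Equiv.ofBijective (fun i : Fin n => p i)
    ⟨fun i j hij => Fin.ext (h.inj i i.2 j j.2 hij),
      fun x => by obtain ⟨i, hi, rfl⟩ := h.surj x; exact ⟨⟨i, hi⟩, rfl⟩⟩, fun _ => rfl⟩

theorem index_eq (h : Model Γ n s u p) : Γ.index = n := by
  obtain ⟨e, -⟩ := h.exists_equiv
  rw [Subgroup.index, ← Nat.card_congr e, Nat.card_eq_fintype_card, Fintype.card_fin]

theorem card_fin_sub (n : ℕ) (P : ℕ → Prop) [DecidablePred P] :
    Nat.card {i : Fin n // P i} = Nat.count P n := by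
  rw [Nat.count_eq_card_filter_range, Nat.card_eq_fintype_card, Fintype.card_subtype]
  refine Finset.card_bij (fun i _ => (i : ℕ)) ?_ ?_ ?_
  · intro i hi; simpa using hi
  · intro i _ j _ hij; exact Fin.ext hij
  · intro i hi
    simp at hi
    exact ⟨⟨i, hi.1⟩, by simpa using hi.2, rfl⟩

theorem nFix_eq (h : Model Γ n s u p) (g : PSL2Z) (f : ℕ → ℕ)
    (hf : ∀ i < n, f i < n ∧ g • p i = p (f i)) :
    nFix g Γ = Nat.count (fun i => f i = i) n := by
  obtain ⟨e, he⟩ := h.exists_equiv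
  rw [← card_fin_sub, nFix]
  refine (Nat.card_congr (e.subtypeEquiv ?_)).symm
  intro i
  rw [he, (hf i i.2).2]
  exact ⟨fun hi => by rw [hi], fun hi => h.inj _ (hf i i.2).1 _ i.2 hi⟩

theorem iter (g : PSL2Z) (f : ℕ → ℕ)
    (hf : ∀ i < n, f i < n ∧ g • p i = p (f i)) (k : ℕ) :
    ∀ i < n, f^[k] i < n ∧ g ^ k • p i = p (f^[k] i) := by
  intro i hi
  induction k with
  | zero => simp [hi]
  | succ k ih =>
    rw [Function.iterate_succ_apply', pow_succ', mul_smul, ih.2]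
    exact hf _ ih.1

theorem nOrb_eq (h : Model Γ n s u p) (g : PSL2Z) (f : ℕ → ℕ)
    (hf : ∀ i < n, f i < n ∧ g • p i = p (f i)) :
    nOrb g Γ = orbCount f n := by
  classical
  obtain ⟨e, he⟩ := h.exists_equiv
  have hfin : Finite (PSL2Z ⧸ Γ) := Finite.of_equiv _ e
  have hcard : Nat.card (PSL2Z ⧸ Γ) = n := by
    rw [← Nat.card_congr e, Nat.card_eq_fintype_card, Fintype.card_fin]
  have hit := iter (p := p) g f hf
  -- any two points of an orbit are related by fewer than `n` steps
  have hrel : ∀ x y : PSL2Z ⧸ Γ, x ∈ MulAction.orbit (Subgroup.zpowers g) y →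
      ∃ k < n, g ^ k • y = x := by
    rintro x y ⟨⟨_, z, rfl⟩, rfl⟩
    have : Fintype (PSL2Z ⧸ Γ) := Fintype.ofFinite _
    have hm : Function.minimalPeriod (g • ·) y ≤ n := by
      rw [MulAction.minimalPeriod_eq_card, ← hcard, Nat.card_eq_fintype_card]
      exact Fintype.card_subtype_le _
    have hm0 : 0 < Function.minimalPeriod (g • ·) y := by
      rw [MulAction.minimalPeriod_eq_card]
      exact Fintype.card_pos_iff.mpr ⟨⟨y, MulAction.mem_orbit_self y⟩⟩
    have hz := MulAction.zpow_smul_mod_minimalPeriod g y z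
    have h1 := Int.emod_nonneg z (b := (Function.minimalPeriod (g • ·) y : ℤ)) (by omega)
    have h2 := Int.emod_lt_of_pos z (b := (Function.minimalPeriod (g • ·) y : ℤ)) (by omega)
    obtain ⟨k, hk⟩ := Int.eq_ofNat_of_zero_le h1
    refine ⟨k, by omega, ?_⟩
    rw [hk] at hz
    change g ^ k • y = g ^ z • y
    simpa using hz
  have horb : ∀ (k : ℕ) (x : PSL2Z ⧸ Γ), g ^ k • x ∈ MulAction.orbit (Subgroup.zpowers g) x :=
    fun k x => ⟨⟨g ^ k, Subgroup.npow_mem_zpowers g k⟩, rfl⟩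
  rw [orbCount, ← card_fin_sub, nOrb]
  symm
  refine Nat.card_congr (Equiv.ofBijective
    (fun i => (Quotient.mk'' (e i.1) :
      MulAction.orbitRel.Quotient (Subgroup.zpowers g) (PSL2Z ⧸ Γ))) ⟨?_, ?_⟩)
  · rintro ⟨i, hi⟩ ⟨j, hj⟩ hij
    rw [orbMin_iff] at hi hj
    have hij' : e i ∈ MulAction.orbit (Subgroup.zpowers g) (e j) := by
      have := Quotient.exact hij
      exact this
    have hji' := (MulAction.mem_orbit_symm.mp hij')
    obtain ⟨k, hk, h1⟩ := hrel _ _ hij'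
    obtain ⟨l, hl, h2⟩ := hrel _ _ hji'
    rw [he, he, (hit k j j.2).2] at h1
    rw [he, he, (hit l i i.2).2] at h2
    have h1' := h.inj _ (hit k j j.2).1 _ i.2 h1
    have h2' := h.inj _ (hit l i i.2).1 _ j.2 h2
    have h3 := hj k hk
    have h4 := hi l hl
    apply Subtype.ext
    apply Fin.ext
    change (i : ℕ) = j
    omega
  · intro q
    induction q using Quotient.inductionOn' with
    | h x =>
      have hex : ∃ i, i < n ∧ p i ∈ MulAction.orbit (Subgroup.zpowers g) x := by
        obtain ⟨i, hi, rfl⟩ := h.surj x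
        exact ⟨i, hi, MulAction.mem_orbit_self _⟩
      have hsp := Nat.find_spec hex
      have hmin := fun j => Nat.find_min' hex (m := j)
      set i := Nat.find hex with hidef
      refine ⟨⟨⟨i, hsp.1⟩, ?_⟩, ?_⟩
      · rw [orbMin_iff]
        intro k hk
        refine hmin _ ⟨(hit k i hsp.1).1, ?_⟩
        rw [← (hit k i hsp.1).2]
        rw [← MulAction.orbit_eq_iff.mpr hsp.2]
        exact horb k _
      · apply Quotient.sound'
        change e _ ∈ MulAction.orbit (Subgroup.zpowers g) x
        rw [he]
        exact hsp.2

end Model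

/-- Genus zero condition of a table. -/
def gen0 (n : ℕ) (s u : ℕ → ℕ) : Prop :=
  orbCount s n + orbCount u n + orbCount (fun i => s (u i)) n = n + 2

/-- Weight of a table. -/
def twt (n : ℕ) (s u : ℕ → ℕ) : ℕ :=
  n + 3 * Nat.count (fun i => s i = i) n + 2 * Nat.count (fun i => u i = i) n

namespace Model
variable {Γ : Subgroup PSL2Z} {n : ℕ} {s u : ℕ → ℕ} {p : ℕ → PSL2Z ⧸ Γ}

theorem hT (h : Model Γ n s u p) : ∀ i < n, s (u i) < n ∧ Tp • p i = p (s (u i)) := by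
  intro i hi
  rw [← Sp_mul_Up, mul_smul, (h.hu i hi).2]
  exact h.hs _ (h.hu i hi).1

theorem genusZero_iff (h : Model Γ n s u p) : GenusZero Γ ↔ gen0 n s u := by
  rw [GenusZero, gen0, h.nOrb_eq Sp s h.hs, h.nOrb_eq (Sp * Tp) u h.hu, h.nOrb_eq Tp _ h.hT,
    h.index_eq]

theorem nFix_S (h : Model Γ n s u p) : nFix Sp Γ = Nat.count (fun i => s i = i) n :=
  h.nFix_eq Sp s h.hs

theorem nFix_U (h : Model Γ n s u p) : nFix (Sp * Tp) Γ = Nat.count (fun i => u i = i) n :=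
  h.nFix_eq _ u h.hu

theorem tfIdx_eq (h : Model Γ n s u p) : tfIdx Γ = twt n s u := by
  rw [tfIdx, twt, h.nFix_S, h.nFix_U, h.index_eq]

end Model

/-! ### Conjugacy -/

theorem conj_iff_mem {H K : Subgroup PSL2Z} (g : PSL2Z)
    (h : Subgroup.map (MulAut.conj g).toMonoidHom H = K) (x : PSL2Z) :
    x ∈ H ↔ g * x * g⁻¹ ∈ K := by
  subst h
  constructor
  · intro hx; exact ⟨x, hx, rfl⟩
  · rintro ⟨y, hy, hxy⟩
    have hxy' : g * y * g⁻¹ = g * x * g⁻¹ := hxy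
    have : y = x := by simpa using hxy'
    rwa [← this]

/-- Conjugate subgroups have isomorphic coset spaces. -/
theorem conj_equiv {H K : Subgroup PSL2Z} (h : SubgroupConj H K) :
    ∃ e : PSL2Z ⧸ H ≃ PSL2Z ⧸ K, ∀ (g : PSL2Z) x, e (g • x) = g • e x := by
  obtain ⟨c, hc⟩ := h
  have hm := conj_iff_mem c hc
  have key : ∀ a b : PSL2Z, a⁻¹ * b ∈ H ↔ (a * c⁻¹)⁻¹ * (b * c⁻¹) ∈ K := by
    intro a b
    rw [hm]
    have : (a * c⁻¹)⁻¹ * (b * c⁻¹) = c * (a⁻¹ * b) * c⁻¹ := by group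
    rw [this]
  let F : PSL2Z ⧸ H → PSL2Z ⧸ K := Quotient.lift (fun a : PSL2Z => ((a * c⁻¹ : PSL2Z) : PSL2Z ⧸ K))
    (by
      intro a b hab
      have : a⁻¹ * b ∈ H := QuotientGroup.leftRel_apply.mp hab
      exact QuotientGroup.eq.mpr ((key a b).mp this))
  have hF : ∀ a : PSL2Z, F (a : PSL2Z ⧸ H) = ((a * c⁻¹ : PSL2Z) : PSL2Z ⧸ K) := fun a => rfl
  refine ⟨Equiv.ofBijective F ⟨?_, ?_⟩, ?_⟩
  · intro x y
    induction x using QuotientGroup.induction_on with | _ a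
    induction y using QuotientGroup.induction_on with | _ b
    rw [hF, hF, QuotientGroup.eq, QuotientGroup.eq]
    exact (key a b).mpr
  · intro y
    induction y using QuotientGroup.induction_on with | _ b
    exact ⟨((b * c : PSL2Z) : PSL2Z ⧸ H), by rw [hF]; simp⟩
  · intro g x
    induction x using QuotientGroup.induction_on with | _ a
    change F ((g * a : PSL2Z) : PSL2Z ⧸ H) = g • F (a : PSL2Z ⧸ H)
    rw [hF, hF]
    change _ = ((g * (a * c⁻¹) : PSL2Z) : PSL2Z ⧸ K)
    rw [mul_assoc]

theorem conj_nFix {H K : Subgroup PSL2Z} (h : SubgroupConj H K) (g : PSL2Z) :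
    nFix g H = nFix g K := by
  obtain ⟨e, he⟩ := conj_equiv h
  refine Nat.card_congr (e.subtypeEquiv ?_)
  intro x
  rw [← he, e.apply_eq_iff_eq]

theorem conj_index {H K : Subgroup PSL2Z} (h : SubgroupConj H K) : H.index = K.index := by
  obtain ⟨e, -⟩ := conj_equiv h
  exact Nat.card_congr e

theorem conj_symm {H K : Subgroup PSL2Z} (h : SubgroupConj H K) : SubgroupConj K H := by
  obtain ⟨c, hc⟩ := h
  refine ⟨c⁻¹, ?_⟩
  ext x
  constructor
  · rintro ⟨y, hy, rfl⟩
    rw [conj_iff_mem c hc]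
    change c * (c⁻¹ * y * c⁻¹⁻¹) * c⁻¹ ∈ K
    have : c * (c⁻¹ * y * c⁻¹⁻¹) * c⁻¹ = y := by group
    rw [this]
    exact hy
  · intro hx
    refine ⟨c * x * c⁻¹, (conj_iff_mem c hc x).mp hx, ?_⟩
    change c⁻¹ * (c * x * c⁻¹) * c⁻¹⁻¹ = x
    group

theorem conj_trans {H K L : Subgroup PSL2Z} (h : SubgroupConj H K) (h' : SubgroupConj K L) :
    SubgroupConj H L := by
  obtain ⟨c, hc⟩ := h
  obtain ⟨d, hd⟩ := h'
  refine ⟨d * c, ?_⟩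
  rw [← hd, ← hc, Subgroup.map_map]
  congr 1
  ext x
  simp

theorem conj_refl (H : Subgroup PSL2Z) : SubgroupConj H H := ⟨1, by
  ext x
  simp⟩

/-- An equivariant map of models gives conjugate subgroups. -/
theorem conj_of_models {H K : Subgroup PSL2Z} {n : ℕ} {s u s' u' : ℕ → ℕ}
    {p : ℕ → PSL2Z ⧸ H} {q : ℕ → PSL2Z ⧸ K} (hp : Model H n s u p) (hq : Model K n s' u' q)
    (φ : ℕ → ℕ) (hφ : ∀ i < n, φ i < n ∧ φ (s i) = s' (φ i) ∧ φ (u i) = u' (φ i)) :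
    SubgroupConj H K := by
  choose lab hlab hplab using hp.surj
  let F : PSL2Z ⧸ H → PSL2Z ⧸ K := fun x => q (φ (lab x))
  have hFp : ∀ i < n, F (p i) = q (φ i) := by
    intro i hi
    have : lab (p i) = i := hp.inj _ (hlab _) _ hi (hplab _)
    simp only [F, this]
  have hFS : ∀ x, F (Sp • x) = Sp • F x := by
    intro x
    obtain ⟨i, hi, rfl⟩ := hp.surj x
    rw [(hp.hs i hi).2, hFp _ (hp.hs i hi).1, hFp _ hi, (hφ i hi).2.1, (hq.hs _ (hφ i hi).1).2]
  have hFU : ∀ x, F (Up • x) = Up • F x := by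
    intro x
    obtain ⟨i, hi, rfl⟩ := hp.surj x
    rw [(hp.hu i hi).2, hFp _ (hp.hu i hi).1, hFp _ hi, (hφ i hi).2.2, (hq.hu _ (hφ i hi).1).2]
  have hF : ∀ (g : PSL2Z) x, F (g • x) = g • F x := by
    intro g
    have hg : g ∈ Subgroup.closure ({Sp, Up} : Set PSL2Z) := by rw [closure_SU]; trivial
    induction hg using Subgroup.closure_induction with
    | mem g hg => rcases hg with rfl | rfl; exacts [hFS, hFU]
    | one => simp
    | mul a b _ _ ha hb => intro x; rw [mul_smul, ha, hb, mul_smul]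
    | inv a _ ha => intro x; rw [eq_inv_smul_iff, ← ha, smul_inv_smul]
  obtain ⟨c, hc⟩ := QuotientGroup.mk_surjective (F ((1 : PSL2Z) : PSL2Z ⧸ H))
  refine ⟨c⁻¹, ?_⟩
  have hle : Subgroup.map (MulAut.conj c⁻¹).toMonoidHom H ≤ K := by
    rintro _ ⟨x, hx, rfl⟩
    have h1 : x • ((1 : PSL2Z) : PSL2Z ⧸ H) = ((1 : PSL2Z) : PSL2Z ⧸ H) := by
      change ((x * 1 : PSL2Z) : PSL2Z ⧸ H) = _
      rw [eq_comm, QuotientGroup.eq]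
      simpa using hx
    have h2 := hF x ((1 : PSL2Z) : PSL2Z ⧸ H)
    rw [h1, ← hc] at h2
    have h3 : ((c : PSL2Z) : PSL2Z ⧸ K) = ((x * c : PSL2Z) : PSL2Z ⧸ K) := h2
    rw [QuotientGroup.eq] at h3
    change c⁻¹ * x * c⁻¹⁻¹ ∈ K
    rw [inv_inv, mul_assoc]
    exact h3
  refine le_antisymm hle ?_
  have hi : (Subgroup.map (MulAut.conj c⁻¹).toMonoidHom H).index = n :=
    (Subgroup.index_map_equiv H (MulAut.conj c⁻¹)).trans hp.index_eq
  have hmul := Subgroup.relIndex_mul_index hle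
  rw [hi, hq.index_eq] at hmul
  rw [← Subgroup.relIndex_eq_one]
  exact Nat.eq_of_mul_eq_mul_right hp.npos (by rw [hmul, one_mul])
/-! ### Tables and the exhaustive search

The functions evaluated by the kernel are written with recursors, which is faster. -/

/-- Table lookup. -/
def tb (l : List ℕ) : ℕ → ℕ :=
  List.rec (fun _ => 99) (fun a _ ih i => Nat.rec a (fun j _ => ih j) i) l

theorem tb_eq (l : List ℕ) (i : ℕ) : tb l i = l.getD i 99 := by
  induction l generalizing i with
  | nil => rfl
  | cons a l ih =>
    cases i with
    | zero => rfl
    | succ i => exact (ih i).trans (by simp)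

/-- Evaluate all the entries of a list before passing it on. -/
def forceL {α : Type} (l : List ℕ) : (List ℕ → α) → α :=
  List.rec (fun k => k []) (fun a _ ih k => forceN a fun a' => ih fun l' => k (a' :: l')) l

theorem forceL_eq {α : Type} (l : List ℕ) (k : List ℕ → α) : forceL l k = k l := by
  induction l generalizing k with
  | nil => rfl
  | cons a l ih =>
    change (forceN a fun a' => forceL l fun l' => k (a' :: l')) = _
    rw [forceN_eq, ih]

/-- Bounded universal quantification. -/
def allB (f : ℕ → Bool) (n : ℕ) : Bool := Nat.rec true (fun k ih => cond (f k) ih false) n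

theorem allB_iff (f : ℕ → Bool) (n : ℕ) : allB f n = true ↔ ∀ i < n, f i = true := by
  induction n with
  | zero => simp [allB]
  | succ n ih =>
    change cond (f n) (allB f n) false = true ↔ _
    rw [Nat.forall_lt_succ_right, ← ih]
    cases f n <;> simp

/-- Bounded existential quantification. -/
def exB (f : ℕ → Bool) (n : ℕ) : Bool := Nat.rec false (fun k ih => cond (f k) true ih) n

theorem exB_imp (f : ℕ → Bool) (n : ℕ) (h : exB f n = true) : ∃ i, f i = true := by
  induction n with
  | zero => cases h
  | succ n ih =>
    change cond (f n) true (exB f n) = true at h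
    cases hf : f n with
    | true => exact ⟨n, hf⟩
    | false => rw [hf] at h; exact ih h

/-- Counting. -/
def cntB (f : ℕ → Bool) (n : ℕ) : ℕ := Nat.rec 0 (fun k ih => Nat.add ih (cond (f k) 1 0)) n

theorem cntB_eq (f : ℕ → Bool) (P : ℕ → Prop) [DecidablePred P] (h : ∀ i, f i = true ↔ P i)
    (n : ℕ) : cntB f n = Nat.count P n := by
  induction n with
  | zero => rfl
  | succ n ih =>
    rw [Nat.count_succ, ← ih]
    change cntB f n + cond (f n) 1 0 = _
    congr 1
    by_cases hP : P n
    · rw [if_pos hP, (h n).mpr hP]; rfl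
    · have : f n = false := by rw [← Bool.not_eq_true, h]; exact hP
      rw [if_neg hP, this]; rfl

def fixB (f : ℕ → ℕ) (n : ℕ) : ℕ := cntB (fun i => Nat.beq (f i) i) n

theorem fixB_eq (f : ℕ → ℕ) (n : ℕ) : fixB f n = Nat.count (fun i => f i = i) n :=
  cntB_eq _ _ (fun i => by rw [Nat.beq_eq]) n

def orbB (f : ℕ → ℕ) (n : ℕ) : ℕ := cntB (fun i => orbMin f i n i) n

theorem orbB_eq (f : ℕ → ℕ) (n : ℕ) : orbB f n = orbCount f n :=
  cntB_eq _ _ (fun _ => Iff.rfl) n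

def twtB (n : ℕ) (s u : ℕ → ℕ) : ℕ := n + 3 * fixB s n + 2 * fixB u n

theorem twtB_eq (n s u) : twtB n s u = twt n s u := by
  rw [twtB, twt, fixB_eq, fixB_eq]

def gen0B (n : ℕ) (s u : ℕ → ℕ) : Bool :=
  Nat.beq (orbB s n + orbB u n + orbB (fun i => s (u i)) n) (n + 2)

theorem gen0B_iff (n s u) : gen0B n s u = true ↔ gen0 n s u := by
  rw [gen0B, gen0, orbB_eq, orbB_eq, orbB_eq, Nat.beq_eq]

/-- First undefined position of a table. -/
def fstU (l : List ℕ) : ℕ := List.rec 0 (fun a _ ih => cond (Nat.beq a 99) 0 (ih + 1)) l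

theorem fstU_lt (l : List ℕ) (h : fstU l < l.length) : tb l (fstU l) = 99 := by
  induction l with
  | nil => simp at h
  | cons a l ih =>
    change cond (Nat.beq a 99) 0 (fstU l + 1) < _ at h
    change tb (a :: l) (cond (Nat.beq a 99) 0 (fstU l + 1)) = 99
    cases ha : Nat.beq a 99 with
    | true => exact Nat.beq_eq.mp ha
    | false =>
      rw [ha] at h
      exact ih (by simpa using h)

theorem fstU_ge (l : List ℕ) (h : ¬ fstU l < l.length) : ∀ i < l.length, tb l i ≠ 99 := by
  induction l with
  | nil => simp
  | cons a l ih =>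
    change ¬ cond (Nat.beq a 99) 0 (fstU l + 1) < _ at h
    cases ha : Nat.beq a 99 with
    | true => rw [ha] at h; simp at h
    | false =>
      rw [ha] at h
      intro i hi
      cases i with
      | zero => 
        intro h99
        have h99' : a = 99 := h99
        rw [h99'] at ha
        cases ha
      | succ i => exact ih (by simpa using h) i (by simpa using hi)

/-- Table update. -/
def st (l : List ℕ) : ℕ → ℕ → List ℕ :=
  List.rec (fun _ _ => []) (fun a l ih i v => Nat.rec (v :: l) (fun j _ => a :: ih j v) i) l

theorem st_eq (l : List ℕ) (i v : ℕ) : st l i v = l.set i v := by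
  induction l generalizing i with
  | nil => rfl
  | cons a l ih =>
    cases i with
    | zero => rfl
    | succ i => exact congrArg (a :: ·) (ih i)

/-- A table describing a transitive action, labelled in order of discovery. -/
def validB (U S : List ℕ) : Bool :=
  Nat.blt 0 U.length && allB (fun i => Nat.blt (tb S i) U.length && Nat.blt (tb U i) U.length &&
    Nat.beq (tb S (tb S i)) i && Nat.beq (tb U (tb U (tb U i))) i &&
    (Nat.beq i 0 || Nat.beq (tb U (i - 1)) i || Nat.blt (tb S i) i)) U.length

/-- The representatives: pairs of tables of `U = ST` and of `S`. -/
def reps : List (List ℕ × List ℕ) := [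
  ([0, 2, 3, 1], [1, 0, 2, 3]),
  ([0, 2, 3, 1, 4], [1, 0, 2, 4, 3]),
  ([0, 2, 3, 1, 5, 6, 4], [1, 0, 2, 4, 3, 6, 5]),
  ([0, 2, 3, 1, 4, 5], [1, 0, 4, 5, 2, 3]),
  ([0, 2, 3, 1, 4, 6, 7, 5], [1, 0, 4, 5, 2, 3, 7, 6]),
  ([0, 2, 3, 1, 5, 6, 4], [1, 0, 4, 3, 2, 6, 5]),
  ([0, 2, 3, 1, 5, 6, 4], [1, 0, 4, 5, 2, 3, 6]),
  ([0, 2, 3, 1, 5, 6, 4, 7], [1, 0, 4, 5, 2, 3, 7, 6]),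
  ([0, 2, 3, 1, 5, 6, 4, 8, 9, 7], [1, 0, 4, 5, 2, 3, 7, 6, 9, 8]),
  ([0, 2, 3, 1, 5, 6, 4], [1, 0, 4, 6, 2, 5, 3]),
  ([0, 2, 3, 1, 5, 6, 4, 7], [1, 0, 4, 6, 2, 7, 3, 5]),
  ([0, 2, 3, 1, 5, 6, 4, 8, 9, 7], [1, 0, 4, 6, 2, 7, 3, 5, 9, 8]),
  ([0, 2, 3, 1, 5, 6, 4, 8, 9, 7], [1, 0, 4, 7, 2, 6, 5, 3, 9, 8]),
  ([0, 2, 3, 1, 5, 6, 4, 8, 9, 7], [1, 0, 4, 7, 2, 9, 8, 3, 6, 5]),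
  ([1, 2, 0], [0, 1, 2]),
  ([1, 2, 0, 4, 5, 3], [0, 1, 3, 2, 5, 4]),
  ([1, 2, 0, 4, 5, 3], [0, 3, 4, 1, 2, 5]),
  ([1, 2, 0, 4, 5, 3, 7, 8, 6], [0, 3, 4, 1, 2, 6, 5, 8, 7]),
  ([1, 2, 0, 4, 5, 3], [0, 3, 5, 1, 4, 2]),
  ([1, 2, 0, 4, 5, 3, 7, 8, 6], [0, 3, 5, 1, 6, 2, 4, 8, 7]),
  ([1, 2, 0, 4, 5, 3, 7, 8, 6], [0, 3, 6, 1, 5, 4, 2, 8, 7]),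
  ([1, 2, 0, 4, 5, 3, 7, 8, 6], [0, 3, 6, 1, 8, 7, 2, 5, 4]),
  ([1, 2, 0, 4, 5, 3, 7, 8, 6, 10, 11, 9], [1, 0, 3, 2, 6, 7, 4, 5, 9, 8, 11, 10]),
  ([1, 2, 0, 4, 5, 3, 7, 8, 6, 10, 11, 9], [1, 0, 3, 2, 6, 8, 4, 9, 5, 7, 11, 10]),
  ([1, 2, 0, 4, 5, 3, 7, 8, 6, 10, 11, 9], [1, 0, 3, 2, 6, 9, 4, 8, 7, 5, 11, 10]),
  ([1, 2, 0, 4, 5, 3, 7, 8, 6, 10, 11, 9], [1, 0, 3, 2, 6, 9, 4, 11, 10, 5, 8, 7]),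
  ([1, 2, 0, 4, 5, 3, 7, 8, 6, 10, 11, 9], [3, 5, 6, 0, 9, 1, 2, 11, 10, 4, 8, 7]),
  ([1, 2, 0, 4, 5, 3, 7, 8, 6, 10, 11, 9], [3, 6, 9, 0, 11, 7, 1, 5, 10, 2, 8, 4])]

/-- Candidate isomorphism onto `(U', S')` extending a partial one. -/
def mkphi (U S U' S' : List ℕ) (k : ℕ) : List ℕ → List ℕ :=
  Nat.rec (fun l => l) (fun _ ih l => forceN l.length fun n =>
    forceL (l ++ [cond (Nat.beq (tb U (n - 1)) n)
      (tb U' (tb l (n - 1))) (tb S' (tb l (tb S n)))]) ih) k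

/-- Check that `φ` is an equivariant map of tables. -/
def equivB (n : ℕ) (U S U' S' φ : List ℕ) : Bool :=
  allB (fun i => Nat.blt (tb φ i) n && Nat.beq (tb φ (tb S i)) (tb S' (tb φ i)) &&
    Nat.beq (tb φ (tb U i)) (tb U' (tb φ i))) n

/-- Cycle length of `a` under `f` (only used as a filter). -/
def clen (f : ℕ → ℕ) (a : ℕ) : ℕ :=
  Nat.rec (fun _ => 0) (fun _ ih x => forceN (f x) fun y => cond (Nat.beq y a) 0 (ih y + 1)) 12 a

/-- Check of a complete table. -/
def leafOK (n : ℕ) (U S : List ℕ) : Bool :=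
  cond (Nat.beq (twtB n (tb S) (tb U)) 12 && gen0B n (tb S) (tb U))
    (forceN (clen (fun x => tb S (tb U x)) 0) fun c =>
      forceN (clen (fun x => tb S (tb U (tb U x))) 0) fun d =>
      reps.any fun r => Nat.beq r.1.length n && exB (fun j =>
        Nat.beq (clen (fun x => tb r.2 (tb r.1 x)) j) c &&
        Nat.beq (clen (fun x => tb r.2 (tb r.1 (tb r.1 x))) j) d &&
        forceL (mkphi U S r.1 r.2 (n - 1) [j]) (equivB n U S r.1 r.2)) n)
    true

/-- Exhaustive search over partial tables. -/
def chk (f : ℕ) : List ℕ → List ℕ → Bool :=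
  Nat.rec (fun _ _ => false) (fun _ ih U₀ S₀ => forceL U₀ fun U => forceL S₀ fun S =>
    forceN S.length fun m => forceN (fstU S) fun i =>
    cond (Nat.blt 12 (twtB m (tb S) (tb U))) true <|
    cond (Nat.blt i m)
      (allB (fun j => cond (Nat.beq (tb S j) 99 || Nat.beq (tb S j) i)
          (ih U (st (st S i j) j i)) true) m &&
        ih (U ++ [m]) (st S i m ++ [i]) &&
        ih (U ++ [m + 1, m + 2, m]) (st S i m ++ [i, 99, 99]))
      (leafOK m U S)) f

theorem chk1 : chk 20 [0] [99] = true := by decide +kernel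

theorem chk2 : chk 20 [1, 2, 0] [99, 99, 99] = true := by decide +kernel

theorem reps_valid : ∀ r ∈ reps, validB r.1 r.2 = true ∧
    twtB r.1.length (tb r.2) (tb r.1) = 12 ∧
    gen0B r.1.length (tb r.2) (tb r.1) = true := by decide +kernel
/-! ### Existence of the subgroups with given tables -/

theorem validB_iff (U S : List ℕ) : validB U S = true ↔ 0 < U.length ∧ ∀ i < U.length,
    tb S i < U.length ∧ tb U i < U.length ∧ tb S (tb S i) = i ∧
    tb U (tb U (tb U i)) = i ∧ (i = 0 ∨ tb U (i - 1) = i ∨ tb S i < i) := by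
  simp only [validB, Bool.and_eq_true, Bool.or_eq_true, allB_iff, Nat.blt_eq, Nat.beq_eq,
    and_assoc, or_assoc]

theorem exists_model (U S : List ℕ) (h : validB U S = true) :
    ∃ (Γ : Subgroup PSL2Z) (p : ℕ → PSL2Z ⧸ Γ), Model Γ U.length (tb S) (tb U) p := by
  rw [validB_iff] at h
  obtain ⟨hn, h⟩ := h
  set n := U.length with hndef
  let s : Equiv.Perm (Fin n) :=
    { toFun := fun i => ⟨tb S i, (h i i.2).1⟩
      invFun := fun i => ⟨tb S i, (h i i.2).1⟩
      left_inv := fun i => Fin.ext (h i i.2).2.2.1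
      right_inv := fun i => Fin.ext (h i i.2).2.2.1 }
  let u : Equiv.Perm (Fin n) :=
    { toFun := fun i => ⟨tb U i, (h i i.2).2.1⟩
      invFun := fun i => ⟨tb U (tb U i), (h _ (h i i.2).2.1).2.1⟩
      left_inv := fun i => Fin.ext (h i i.2).2.2.2.1
      right_inv := fun i => Fin.ext (h i i.2).2.2.2.1 }
  obtain ⟨ρ, hρs, hρu⟩ := exists_hom s u
    (Equiv.ext fun i => Fin.ext (h i i.2).2.2.1) (Equiv.ext fun i => Fin.ext (h i i.2).2.2.2.1)
  let o : Fin n := ⟨0, hn⟩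
  let Γ : Subgroup PSL2Z := (MulAction.stabilizer (Equiv.Perm (Fin n)) o).comap ρ
  have hmem : ∀ g, g ∈ Γ ↔ ρ g o = o := fun g => Iff.rfl
  have heq : ∀ a b : PSL2Z, (a : PSL2Z ⧸ Γ) = b ↔ ρ a o = ρ b o := by
    intro a b
    rw [QuotientGroup.eq, hmem, map_mul, map_inv, Equiv.Perm.mul_apply, Equiv.Perm.inv_eq_iff_eq]
    exact eq_comm
  have htrans : ∀ i, ∀ hi : i < n, ∃ g, ρ g o = ⟨i, hi⟩ := by
    intro i
    induction i using Nat.strong_induction_on with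
    | _ i ih =>
      intro hi
      rcases (h i hi).2.2.2.2 with h0 | h0 | h0
      · subst h0; exact ⟨1, by simp [o]⟩
      · by_cases hi0 : i = 0
        · subst hi0; exact ⟨1, by simp [o]⟩
        · obtain ⟨g, hg⟩ := ih (i - 1) (by omega) (by omega)
          refine ⟨Up * g, ?_⟩
          rw [map_mul, Equiv.Perm.mul_apply, hg, hρu]
          exact Fin.ext h0
      · obtain ⟨g, hg⟩ := ih _ h0 (h i hi).1
        refine ⟨Sp * g, ?_⟩
        rw [map_mul, Equiv.Perm.mul_apply, hg, hρs]
        exact Fin.ext (h i hi).2.2.1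
  choose g hg using htrans
  let p : ℕ → PSL2Z ⧸ Γ := fun i => if hi : i < n then (g i hi : PSL2Z ⧸ Γ) else ((1 : PSL2Z) : PSL2Z ⧸ Γ)
  have hp : ∀ i (hi : i < n), p i = (g i hi : PSL2Z ⧸ Γ) := fun i hi => by simp [p, hi]
  refine ⟨Γ, p, hn, ?_, ?_, ?_, ?_⟩
  · intro i hi j hj hij
    rw [hp i hi, hp j hj, heq, hg, hg] at hij
    exact congrArg Fin.val hij
  · intro x
    induction x using QuotientGroup.induction_on with | _ a
    refine ⟨ρ a o, (ρ a o).2, ?_⟩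
    rw [hp _ (ρ a o).2, heq, hg]
  · intro i hi
    refine ⟨(h i hi).1, ?_⟩
    rw [hp _ hi, hp _ (h i hi).1]
    change ((Sp * g i hi : PSL2Z) : PSL2Z ⧸ Γ) = _
    rw [heq, hg, map_mul, Equiv.Perm.mul_apply, hg, hρs]
    rfl
  · intro i hi
    refine ⟨(h i hi).2.1, ?_⟩
    rw [hp _ hi, hp _ (h i hi).2.1]
    change ((Up * g i hi : PSL2Z) : PSL2Z ⧸ Γ) = _
    rw [heq, hg, map_mul, Equiv.Perm.mul_apply, hg, hρu]
    rfl

/-- The `k`-th table. -/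
def rp (k : Fin 28) : List ℕ × List ℕ := reps.get k

theorem rp_mem (k : Fin 28) : rp k ∈ reps := List.get_mem _ _

theorem rp_surj (r) (hr : r ∈ reps) : ∃ k, rp k = r := by
  obtain ⟨k, hk⟩ := List.get_of_mem hr
  exact ⟨k, hk⟩

/-- The `k`-th representative subgroup. -/
noncomputable def Gam (k : Fin 28) : Subgroup PSL2Z :=
  (exists_model _ _ (reps_valid _ (rp_mem k)).1).choose

theorem Gam_model (k : Fin 28) :
    ∃ p, Model (Gam k) (rp k).1.length (tb (rp k).2) (tb (rp k).1) p :=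
  (exists_model _ _ (reps_valid _ (rp_mem k)).1).choose_spec

/-! ### Soundness of the search -/

structure PInv (Γ : Subgroup PSL2Z) (U S : List ℕ) (p : ℕ → PSL2Z ⧸ Γ) : Prop where
  len : U.length = S.length
  npos : 0 < S.length
  inj : ∀ i < S.length, ∀ j < S.length, p i = p j → i = j
  hs : ∀ i < S.length, tb S i = 99 ∨ (tb S i < S.length ∧ Sp • p i = p (tb S i))
  hu : ∀ i < S.length, tb U i < S.length ∧ Up • p i = p (tb U i)

theorem Sp_smul_smul {Γ : Subgroup PSL2Z} (x : PSL2Z ⧸ Γ) : Sp • Sp • x = x := by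
  rw [← mul_smul, Sp_sq, one_smul]

theorem Up_smul_smul {Γ : Subgroup PSL2Z} (x : PSL2Z ⧸ Γ) : Up • Up • Up • x = x := by
  rw [← mul_smul, ← mul_smul, Up_cube, one_smul]

theorem PInv.model {Γ U S p} (h : PInv Γ U S p) (hS : ∀ i < S.length, tb S i ≠ 99) :
    Model Γ S.length (tb S) (tb U) p := by
  have hs : ∀ i < S.length, tb S i < S.length ∧ Sp • p i = p (tb S i) :=
    fun i hi => (h.hs i hi).resolve_left (hS i hi)
  refine ⟨h.npos, h.inj, ?_, hs, h.hu⟩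
  have hcl : ∀ g : PSL2Z, ∀ i < S.length, ∃ j < S.length, p j = g • p i := by
    intro g
    have hg : g ∈ Subgroup.closure ({Sp, Up} : Set PSL2Z) := by rw [closure_SU]; trivial
    have hSi : Sp⁻¹ = Sp := inv_eq_of_mul_eq_one_left Sp_sq
    have hUi : Up⁻¹ = Up * Up := inv_eq_of_mul_eq_one_left Up_cube
    have hU : ∀ y : PSL2Z, (∀ i < S.length, ∃ j < S.length, p j = y • p i) →
        (∀ i < S.length, ∃ j < S.length, p j = (Up * y) • p i) := by
      intro y ih i hi
      obtain ⟨j, hj, hj'⟩ := ih i hi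
      exact ⟨_, (h.hu j hj).1, by rw [mul_smul, ← hj', (h.hu j hj).2]⟩
    have hS' : ∀ y : PSL2Z, (∀ i < S.length, ∃ j < S.length, p j = y • p i) →
        (∀ i < S.length, ∃ j < S.length, p j = (Sp * y) • p i) := by
      intro y ih i hi
      obtain ⟨j, hj, hj'⟩ := ih i hi
      exact ⟨_, (hs j hj).1, by rw [mul_smul, ← hj', (hs j hj).2]⟩
    induction hg using Subgroup.closure_induction_left with
    | one => intro i hi; exact ⟨i, hi, by simp⟩
    | mul_left x hx y hy ih =>
      rcases hx with rfl | rfl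
      · exact hS' _ ih
      · exact hU _ ih
    | inv_mul_cancel x hx y hy ih =>
      rcases hx with rfl | rfl
      · rw [hSi]; exact hS' _ ih
      · rw [hUi, mul_assoc]; exact hU _ (hU _ ih)
  intro x
  obtain ⟨g, rfl⟩ := MulAction.exists_smul_eq PSL2Z (p 0) x
  exact hcl g 0 h.npos

theorem PInv.len_le {Γ U S p} (h : PInv Γ U S p) (hfin : Γ.index ≠ 0) :
    S.length ≤ Γ.index := by
  have : Finite (PSL2Z ⧸ Γ) := Nat.finite_of_card_ne_zero hfin
  have h1 := Nat.card_le_card_of_injective (fun i : Fin S.length => p i)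
    (fun i j hij => Fin.ext (h.inj i i.2 j j.2 hij))
  rw [Nat.card_fin] at h1
  exact h1

theorem PInv.twt_le {Γ U S p} (h : PInv Γ U S p) (hfin : Γ.index ≠ 0) (hw : tfIdx Γ = 12) :
    twt S.length (tb S) (tb U) ≤ 12 := by
  have : Finite (PSL2Z ⧸ Γ) := Nat.finite_of_card_ne_zero hfin
  have h1 := h.len_le hfin
  rw [tfIdx] at hw
  have h2 : Nat.count (fun i => tb S i = i) S.length ≤ nFix Sp Γ := by
    rw [← Model.card_fin_sub]
    refine Nat.card_le_card_of_injective
      (fun i => ⟨p i.1, ?_⟩) (fun i j hij => Subtype.ext (Fin.ext (h.inj i.1 i.1.2 j.1 j.1.2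
        (congrArg Subtype.val hij))))
    obtain ⟨i, hi⟩ := i
    have := i.2
    rcases h.hs i i.2 with h' | h'
    · omega
    · change Sp • p i = p i
      rw [h'.2, hi]
  have h3 : Nat.count (fun i => tb U i = i) S.length ≤ nFix (Sp * Tp) Γ := by
    rw [← Model.card_fin_sub]
    refine Nat.card_le_card_of_injective
      (fun i => ⟨p i.1, ?_⟩) (fun i j hij => Subtype.ext (Fin.ext (h.inj i.1 i.1.2 j.1 j.1.2
        (congrArg Subtype.val hij))))
    obtain ⟨i, hi⟩ := i
    change Up • p i = p i
    rw [(h.hu i i.2).2, hi]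
  rw [twt]
  omega

theorem leaf_sound {Γ U S p} (h : Model Γ S.length (tb S) (tb U) p) (hg : GenusZero Γ)
    (hw : tfIdx Γ = 12) (hl : leafOK S.length U S = true) : ∃ k, SubgroupConj (Gam k) Γ := by
  have h1 : Nat.beq (twtB S.length (tb S) (tb U)) 12 = true := by
    rw [Nat.beq_eq, twtB_eq, ← h.tfIdx_eq, hw]
  have h2 : gen0B S.length (tb S) (tb U) = true := by
    rw [gen0B_iff, ← h.genusZero_iff]; exact hg
  rw [leafOK, h1, h2, Bool.and_self, cond_true, forceN_eq, forceN_eq, List.any_eq_true] at hl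
  obtain ⟨r, hr, hl⟩ := hl
  obtain ⟨k, rfl⟩ := rp_surj r hr
  rw [Bool.and_eq_true, Nat.beq_eq] at hl
  obtain ⟨hlen, hl⟩ := hl
  obtain ⟨j, hj⟩ := exB_imp _ _ hl
  rw [Bool.and_eq_true, forceL_eq] at hj
  have he := hj.2
  rw [equivB, allB_iff] at he
  obtain ⟨q, hq⟩ := Gam_model k
  rw [hlen] at hq
  refine ⟨k, conj_symm (conj_of_models h hq
    (tb (mkphi U S (rp k).1 (rp k).2 (S.length - 1) [j])) ?_)⟩
  · intro i hi
    have := he i hi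
    simpa only [Bool.and_eq_true, Nat.blt_eq, Nat.beq_eq, and_assoc] using this

theorem tb_set (l : List ℕ) (i v k : ℕ) (hi : i < l.length) :
    tb (l.set i v) k = if k = i then v else tb l k := by
  rw [tb_eq, tb_eq, List.getD_eq_getElem?_getD, List.getD_eq_getElem?_getD, List.getElem?_set]
  by_cases h : i = k
  · subst h; simp [hi]
  · rw [if_neg h, if_neg (Ne.symm h)]

theorem tb_append (l m : List ℕ) (k : ℕ) :
    tb (l ++ m) k = if k < l.length then tb l k else tb m (k - l.length) := by
  simp only [tb_eq, List.getD_eq_getElem?_getD, List.getElem?_append]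
  split_ifs <;> rfl

theorem chk_succ (f : ℕ) (U S : List ℕ) : chk (f + 1) U S =
    cond (Nat.blt 12 (twtB S.length (tb S) (tb U))) true (cond (Nat.blt (fstU S) S.length)
      (allB (fun j => cond (Nat.beq (tb S j) 99 || Nat.beq (tb S j) (fstU S))
          (chk f U ((S.set (fstU S) j).set j (fstU S))) true) S.length &&
        chk f (U ++ [S.length]) (S.set (fstU S) S.length ++ [fstU S]) &&
        chk f (U ++ [S.length + 1, S.length + 2, S.length])
          (S.set (fstU S) S.length ++ [fstU S, 99, 99]))
      (leafOK S.length U S)) := by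
  change (forceL U fun U => forceL S fun S =>
    forceN S.length fun m => forceN (fstU S) fun i =>
    cond (Nat.blt 12 (twtB m (tb S) (tb U))) true <|
    cond (Nat.blt i m)
      (allB (fun j => cond (Nat.beq (tb S j) 99 || Nat.beq (tb S j) i)
          (chk f U (st (st S i j) j i)) true) m &&
        chk f (U ++ [m]) (st S i m ++ [i]) &&
        chk f (U ++ [m + 1, m + 2, m]) (st S i m ++ [i, 99, 99]))
      (leafOK m U S)) = _
  simp only [forceL_eq, forceN_eq, st_eq]

theorem sound {Γ : Subgroup PSL2Z} (hfin : Γ.index ≠ 0) (hg : GenusZero Γ) (hw : tfIdx Γ = 12)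
    (f : ℕ) : ∀ U S p, PInv Γ U S p → chk f U S = true → ∃ k, SubgroupConj (Gam k) Γ := by
  induction f with
  | zero => intro U S p _ h; cases h
  | succ f ih =>
    intro U S p h hc
    rw [chk_succ] at hc
    have h12 : Nat.blt 12 (twtB S.length (tb S) (tb U)) = false := by
      rw [← Bool.not_eq_true, Nat.blt_eq, twtB_eq]
      have := h.twt_le hfin hw
      omega
    rw [h12, cond_false] at hc
    by_cases hi : fstU S < S.length
    · rw [Nat.blt_eq.mpr hi, cond_true, Bool.and_eq_true, Bool.and_eq_true, allB_iff] at hc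
      obtain ⟨⟨hc1, hc2⟩, hc3⟩ := hc
      have h99 := fstU_lt S hi
      set i := fstU S with hidef
      set m := S.length with hm
      by_cases hlab : ∃ j < m, Sp • p i = p j
      · -- the image is already labelled
        obtain ⟨j, hj, hij⟩ := hlab
        have hji : Sp • p j = p i := by rw [← hij, Sp_smul_smul]
        have hcj := hc1 j hj
        have hcond : (Nat.beq (tb S j) 99 || Nat.beq (tb S j) i) = true := by
          rw [Bool.or_eq_true, Nat.beq_eq, Nat.beq_eq]
          rcases h.hs j hj with h' | h'
          · exact Or.inl h'
          · right
            rw [hji] at h'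
            exact (h.inj _ hi _ h'.1 h'.2).symm
        rw [hcond, cond_true] at hcj
        refine ih _ _ p ⟨by simpa using h.len, by simpa using h.npos, by simpa using h.inj, ?_,
          by simpa using h.hu⟩ hcj
        intro k hk
        simp only [List.length_set] at hk ⊢
        rw [tb_set _ _ _ _ (by simpa using hj), tb_set _ _ _ _ hi]
        split_ifs with h1 h2
        · subst h1; exact Or.inr ⟨hi, hji⟩
        · subst h2; exact Or.inr ⟨hj, hij⟩
        · exact h.hs k hk
      · push Not at hlab
        set y := Sp • p i with hy
        have hyi : Sp • y = p i := by rw [hy, Sp_smul_smul]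
        have hUlen : U.length = m := h.len
        by_cases hfix : Up • y = y
        · -- a new fixed point of `U`
          refine ih _ _ (fun k => if k < m then p k else y) ⟨?_, ?_, ?_, ?_, ?_⟩ hc2
          · simp [hUlen, hm]
          · simp
          · intro a ha b hb hab
            simp only [List.length_append, List.length_set, List.length_singleton] at ha hb
            have hlab' : ∀ j < m, p j ≠ y := fun j hj h => hlab j hj h.symm
            by_cases ha' : a < m <;> by_cases hb' : b < m <;> simp only [ha', hb', if_true, if_false] at hab
            · exact h.inj a ha' b hb' hab
            · exact absurd hab (hlab' a ha')
            · exact absurd hab.symm (hlab' b hb')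
            · omega
          · intro k hk
            simp only [List.length_append, List.length_set, List.length_singleton] at hk ⊢
            rw [tb_append, tb_set _ _ _ _ hi]
            simp only [List.length_set, ← hm]
            by_cases hk' : k < m
            · by_cases hki : k = i
              · subst hki
                simp [hi, ← hy]
              · rcases h.hs k hk' with h' | h'
                · left; simp [hk', hki, h']
                · right
                  have h1 : tb S k < m := h'.1
                  simp only [hk', hki, if_true, if_false, h1]
                  exact ⟨by omega, h'.2⟩
            · have : k = m := by omega
              subst this
              right
              simp only [lt_irrefl, if_false, Nat.sub_self]
              change i < m + 1 ∧ Sp • y = if i < m then p i else y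
              simp only [hi, if_true]
              exact ⟨by omega, hyi⟩
          · intro k hk
            simp only [List.length_append, List.length_set, List.length_singleton] at hk ⊢
            rw [tb_append, hUlen]
            by_cases hk' : k < m
            · have h' := h.hu k hk'
              have h1 : tb U k < m := h'.1
              simp only [hk', if_true, h1]
              exact ⟨by omega, h'.2⟩
            · have : k = m := by omega
              subst this
              simp only [lt_irrefl, if_false, Nat.sub_self]
              change m < m + 1 ∧ Up • y = if m < m then p m else y
              simp [hfix]
        · -- a new orbit of length three
          have hU3 : Up • Up • Up • y = y := Up_smul_smul y
          have hlab0 : ∀ j < m, p j ≠ y := fun j hj h => hlab j hj h.symm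
          have hlab2 : ∀ j < m, p j ≠ Up • Up • y := by
            intro j hj hj'
            apply hlab0 _ (h.hu j hj).1
            rw [← (h.hu j hj).2, hj', hU3]
          have hlab1 : ∀ j < m, p j ≠ Up • y := by
            intro j hj hj'
            apply hlab2 _ (h.hu j hj).1
            rw [← (h.hu j hj).2, hj']
          have h01 : y ≠ Up • y := fun h => hfix h.symm
          have h12 : Up • y ≠ Up • Up • y := fun h => h01 (smul_left_cancel _ h)
          have h02 : y ≠ Up • Up • y := by
            intro h
            have h' := congrArg (Up • ·) h
            simp only [hU3] at h'
            exact hfix h'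
          let q : ℕ → PSL2Z ⧸ Γ := fun k => if k < m then p k else if k = m then y else
            if k = m + 1 then Up • y else Up • Up • y
          have q0 : ∀ k < m, q k = p k := fun k hk => by simp [q, hk]
          have q1 : q m = y := by simp [q]
          have q2 : q (m + 1) = Up • y := by simp [q]
          have q3 : q (m + 2) = Up • Up • y := by simp [q]
          have hcases : ∀ k, k < m + 3 → k < m ∨ k = m ∨ k = m + 1 ∨ k = m + 2 := by
            intro k hk; omega
          refine ih _ _ q ⟨?_, ?_, ?_, ?_, ?_⟩ hc3
          · simp [hUlen, hm]
          · simp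
          · intro a ha b hb hab
            simp only [List.length_append, List.length_set, List.length_cons, List.length_nil] at ha hb
            rcases hcases a ha with ha | rfl | rfl | rfl <;>
            rcases hcases b hb with hb | rfl | rfl | rfl <;>
            (try rw [q0 _ ha] at hab) <;> (try rw [q0 _ hb] at hab) <;>
            (try simp only [q1, q2, q3] at hab) <;>
            first
            | rfl
            | exact h.inj _ ha _ hb hab
            | exact absurd hab (hlab0 _ ‹_›)
            | exact absurd hab (hlab1 _ ‹_›)
            | exact absurd hab (hlab2 _ ‹_›)
            | exact absurd hab.symm (hlab0 _ ‹_›)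
            | exact absurd hab.symm (hlab1 _ ‹_›)
            | exact absurd hab.symm (hlab2 _ ‹_›)
            | exact absurd hab h01
            | exact absurd hab h02
            | exact absurd hab h12
            | exact absurd hab.symm h01
            | exact absurd hab.symm h02
            | exact absurd hab.symm h12
          · intro k hk
            simp only [List.length_append, List.length_set, List.length_cons, List.length_nil] at hk ⊢
            rw [tb_append, tb_set _ _ _ _ hi]
            simp only [List.length_set, ← hm]
            rcases hcases k hk with hk' | rfl | rfl | rfl
            · by_cases hki : k = i
              · subst hki
                right
                simp only [hi, if_true, q0 _ hi, q1]
                exact ⟨by omega, hy.symm⟩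
              · rcases h.hs k hk' with h' | h'
                · left; simp [hk', hki, h']
                · right
                  simp only [hk', hki, if_true, if_false, q0 _ hk', q0 _ h'.1]
                  exact ⟨by omega, h'.2⟩
            · right
              simp only [lt_irrefl, if_false, Nat.sub_self, q1]
              change i < m + 3 ∧ Sp • y = q i
              rw [q0 _ hi]
              exact ⟨by omega, hyi⟩
            · left
              rw [if_neg (by omega), Nat.add_sub_cancel_left]
              rfl
            · left
              rw [if_neg (by omega), Nat.add_sub_cancel_left]
              rfl
          · intro k hk
            simp only [List.length_append, List.length_set, List.length_cons, List.length_nil] at hk ⊢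
            rw [tb_append, hUlen]
            rcases hcases k hk with hk' | rfl | rfl | rfl
            · have h' := h.hu k hk'
              simp only [hk', if_true, q0 _ hk', q0 _ h'.1]
              exact ⟨by omega, h'.2⟩
            · simp only [lt_irrefl, if_false, Nat.sub_self, q1]
              change m + 1 < m + 3 ∧ Up • y = q (m + 1)
              rw [q2]
              exact ⟨by omega, rfl⟩
            · rw [if_neg (by omega), Nat.add_sub_cancel_left, q2]
              change m + 2 < m + 3 ∧ Up • Up • y = q (m + 2)
              rw [q3]
              exact ⟨by omega, rfl⟩
            · rw [if_neg (by omega), Nat.add_sub_cancel_left, q3]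
              change m < m + 3 ∧ Up • Up • Up • y = q m
              rw [q1]
              exact ⟨by omega, hU3⟩
    · have hb : Nat.blt (fstU S) S.length = false := by
        rw [← Bool.not_eq_true, Nat.blt_eq]; exact hi
      rw [hb, cond_false] at hc
      exact leaf_sound (h.model (fstU_ge S hi)) hg hw hc

/-- Completeness of the list of representatives. -/
theorem complete (Γ : Subgroup PSL2Z) (hfin : Γ.index ≠ 0) (hg : GenusZero Γ)
    (hw : tfIdx Γ = 12) : ∃ k, SubgroupConj (Gam k) Γ := by
  let y : PSL2Z ⧸ Γ := ((1 : PSL2Z) : PSL2Z ⧸ Γ)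
  by_cases hfix : Up • y = y
  · refine sound hfin hg hw 20 [0] [99] (fun _ => y) ⟨rfl, by simp, ?_, ?_, ?_⟩ chk1
    · intro i hi j hj _
      simp at hi hj; omega
    · intro i hi
      simp at hi; subst hi; left; rfl
    · intro i hi
      simp at hi; subst hi
      exact ⟨by decide, hfix⟩
  · have hU3 : Up • Up • Up • y = y := Up_smul_smul y
    have h01 : y ≠ Up • y := fun h => hfix h.symm
    have h12 : Up • y ≠ Up • Up • y := fun h => h01 (smul_left_cancel _ h)
    have h02 : y ≠ Up • Up • y := by
      intro h
      have h' := congrArg (Up • ·) h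
      simp only [hU3] at h'
      exact hfix h'
    have hcases : ∀ k : ℕ, k < 3 → k = 0 ∨ k = 1 ∨ k = 2 := by intro k hk; omega
    refine sound hfin hg hw 20 [1, 2, 0] [99, 99, 99]
      (fun k => if k = 0 then y else if k = 1 then Up • y else Up • Up • y)
      ⟨rfl, by simp, ?_, ?_, ?_⟩ chk2
    · intro i hi j hj hij
      rcases hcases i hi with rfl | rfl | rfl <;> rcases hcases j hj with rfl | rfl | rfl <;>
        first
        | rfl
        | exact absurd hij h01
        | exact absurd hij h02
        | exact absurd hij h12
        | exact absurd hij.symm h01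
        | exact absurd hij.symm h02
        | exact absurd hij.symm h12
    · intro i hi
      left
      rcases hcases i hi with rfl | rfl | rfl <;> rfl
    · intro i hi
      rcases hcases i hi with rfl | rfl | rfl
      · exact ⟨by decide, rfl⟩
      · exact ⟨by decide, rfl⟩
      · exact ⟨by decide, hU3⟩

/-! ### Irredundancy -/

/-- Words whose fixed point counts separate the representatives. -/
def wA : List Bool := [false, true, false, true, false, true, false, true]

def wB : List Bool := [false, true, false, true, false, true]

def wC : List Bool := [false, true, false, true, false, true, true, false, true, false, true, true,
  false, true, true]

/-- Invariants of a table. -/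
def sig (r : List ℕ × List ℕ) : List ℕ :=
  [r.1.length, fixB (wfun (tb r.2) (tb r.1) wA) r.1.length,
    fixB (wfun (tb r.2) (tb r.1) wB) r.1.length, fixB (wfun (tb r.2) (tb r.1) wC) r.1.length]

theorem sig_inj : ∀ i j : Fin 28, sig (rp i) = sig (rp j) → i = j := by decide +kernel

theorem Gam_inj (i j : Fin 28) (h : SubgroupConj (Gam i) (Gam j)) : i = j := by
  apply sig_inj
  obtain ⟨p, hp⟩ := Gam_model i
  obtain ⟨q, hq⟩ := Gam_model j
  have key : ∀ w, fixB (wfun (tb (rp i).2) (tb (rp i).1) w) (rp i).1.length =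
      fixB (wfun (tb (rp j).2) (tb (rp j).1) w) (rp j).1.length := by
    intro w
    rw [fixB_eq, fixB_eq, ← hp.nFix_eq _ _ (hp.word w), ← hq.nFix_eq _ _ (hq.word w)]
    exact conj_nFix h _
  have hlen : (rp i).1.length = (rp j).1.length := by
    rw [← hp.index_eq, ← hq.index_eq]; exact conj_index h
  rw [sig, sig, key wA, key wB, key wC, hlen]

/-! ### Counting -/

theorem Gam_base (k : Fin 28) :
    (Gam k).index ≠ 0 ∧ GenusZero (Gam k) ∧ tfIdx (Gam k) = 12 := by
  obtain ⟨p, hp⟩ := Gam_model k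
  obtain ⟨-, h2, h3⟩ := reps_valid _ (rp_mem k)
  refine ⟨?_, ?_, ?_⟩
  · rw [hp.index_eq]; exact hp.npos.ne'
  · rw [hp.genusZero_iff, ← gen0B_iff]; exact h3
  · rw [hp.tfIdx_eq, ← twtB_eq]; exact h2

theorem Gam_nFix (k : Fin 28) : nFix Sp (Gam k) = fixB (tb (rp k).2) (rp k).1.length ∧
    nFix (Sp * Tp) (Gam k) = fixB (tb (rp k).1) (rp k).1.length := by
  obtain ⟨p, hp⟩ := Gam_model k
  rw [hp.nFix_S, hp.nFix_U, fixB_eq, fixB_eq]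
  exact ⟨rfl, rfl⟩

theorem torsionFree_iff (Γ : Subgroup PSL2Z) (hfin : Γ.index ≠ 0) :
    TorsionFree Γ ↔ nFix Sp Γ = 0 ∧ nFix (Sp * Tp) Γ = 0 := by
  have : Finite (PSL2Z ⧸ Γ) := Nat.finite_of_card_ne_zero hfin
  have hzero : ∀ g, nFix g Γ = 0 ↔ ∀ c : PSL2Z, ¬ c⁻¹ * g * c ∈ Γ := by
    intro g
    have hfix : ∀ c : PSL2Z, g • (c : PSL2Z ⧸ Γ) = c ↔ c⁻¹ * g * c ∈ Γ := by
      intro c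
      change ((g * c : PSL2Z) : PSL2Z ⧸ Γ) = c ↔ _
      rw [eq_comm, QuotientGroup.eq, mul_assoc]
    rw [nFix, Finite.card_eq_zero_iff]
    constructor
    · intro he c hc
      exact he.false ⟨(c : PSL2Z ⧸ Γ), (hfix c).mpr hc⟩
    · intro h
      refine ⟨?_⟩
      rintro ⟨x, hx⟩
      induction x using QuotientGroup.induction_on with | _ c
      exact h c ((hfix c).mp hx)
  rw [hzero, hzero]
  constructor
  · intro h
    constructor
    · intro c hc
      refine h _ hc ?_ (isOfFinOrder_iff_pow_eq_one.mpr ⟨2, by norm_num, ?_⟩)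
      · intro h1
        apply Sp_ne
        calc Sp = c * (c⁻¹ * Sp * c) * c⁻¹ := by group
          _ = 1 := by rw [h1]; group
      · calc (c⁻¹ * Sp * c) ^ 2 = c⁻¹ * (Sp * Sp) * c := by simp [pow_succ, mul_assoc]
          _ = 1 := by rw [Sp_sq]; group
    · intro c hc
      refine h _ hc ?_ (isOfFinOrder_iff_pow_eq_one.mpr ⟨3, by norm_num, ?_⟩)
      · intro h1
        apply Up_ne
        calc Up = c * (c⁻¹ * (Sp * Tp) * c) * c⁻¹ := by rw [Up]; group
          _ = 1 := by rw [h1]; group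
      · change (c⁻¹ * Up * c) ^ 3 = 1
        calc (c⁻¹ * Up * c) ^ 3 = c⁻¹ * (Up * Up * Up) * c := by simp [pow_succ, mul_assoc]
          _ = 1 := by rw [Up_cube]; group
  · rintro ⟨h1, h2⟩ x hx hx1 hf
    obtain ⟨c, hc | hc | hc⟩ := torsion_conj x hx1 hf
    · apply h1 c
      rw [← hc]
      have : c⁻¹ * (c * x * c⁻¹) * c = x := by group
      rwa [this]
    · apply h2 c
      change c⁻¹ * Up * c ∈ Γ
      rw [← hc]
      have : c⁻¹ * (c * x * c⁻¹) * c = x := by group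
      rwa [this]
    · apply h2 c
      change c⁻¹ * Up * c ∈ Γ
      have hU : Up = (Up * Up) * (Up * Up) := by
        calc Up = (Up * Up * Up) * Up := by rw [Up_cube, one_mul]
          _ = _ := by group
      rw [hU, ← hc]
      have : c⁻¹ * (c * x * c⁻¹ * (c * x * c⁻¹)) * c = x * x := by group
      rw [this]
      exact mul_mem hx hx

theorem count_general (P : Subgroup PSL2Z → Prop)
    (hP : ∀ Γ, P Γ → Γ.index ≠ 0 ∧ GenusZero Γ ∧ tfIdx Γ = 12)
    (hinv : ∀ H K, SubgroupConj H K → P K → P H) (b : Fin 28 → Bool)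
    (hb : ∀ k, P (Gam k) ↔ b k = true) :
    countClasses P = (Finset.univ.filter (fun k => b k = true)).card := by
  rw [countClasses, ← Fintype.card_subtype, ← Nat.card_eq_fintype_card]
  symm
  have heqv : Equivalence (fun A B : {Γ : Subgroup PSL2Z // P Γ} => SubgroupConj A.1 B.1) :=
    ⟨fun A => conj_refl _, fun h => conj_symm h, fun h h' => conj_trans h h'⟩
  refine Nat.card_congr (Equiv.ofBijective
    (fun k => Quot.mk _ ⟨Gam k.1, (hb k.1).mpr k.2⟩) ⟨?_, ?_⟩)
  · rintro ⟨i, hi⟩ ⟨j, hj⟩ hij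
    have := (heqv.quot_mk_eq_iff _ _).mp hij
    exact Subtype.ext (Gam_inj i j this)
  · intro q
    induction q using Quot.ind with | _ A
    obtain ⟨Γ, hΓ⟩ := A
    obtain ⟨h1, h2, h3⟩ := hP Γ hΓ
    obtain ⟨k, hk⟩ := complete Γ h1 h2 h3
    exact ⟨⟨k, (hb k).mp (hinv _ _ hk hΓ)⟩, Quot.sound hk⟩

theorem conj_nOrb {H K : Subgroup PSL2Z} (h : SubgroupConj H K) (g : PSL2Z) :
    nOrb g H = nOrb g K := by
  obtain ⟨e, he⟩ := conj_equiv h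
  refine Nat.card_congr (Quotient.congr e ?_)
  intro x y
  change x ∈ MulAction.orbit _ y ↔ e x ∈ MulAction.orbit _ (e y)
  constructor
  · rintro ⟨a, rfl⟩
    exact ⟨a, (he a.1 y).symm⟩
  · rintro ⟨a, ha⟩
    refine ⟨a, e.injective ?_⟩
    exact (he a.1 y).trans ha

theorem base_conj {H K : Subgroup PSL2Z} (h : SubgroupConj H K)
    (hK : K.index ≠ 0 ∧ GenusZero K ∧ tfIdx K = 12) :
    H.index ≠ 0 ∧ GenusZero H ∧ tfIdx H = 12 := by
  simp only [GenusZero, tfIdx, conj_index h, conj_nOrb h, conj_nFix h] at hK ⊢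
  exact hK

/-- Counting classes cut out by a condition on `(e₂, e₃)`. -/
theorem count_fix (P : Subgroup PSL2Z → Prop) (c : ℕ → ℕ → Bool)
    (hP : ∀ Γ, P Γ ↔ (Γ.index ≠ 0 ∧ GenusZero Γ ∧ tfIdx Γ = 12) ∧
      c (nFix Sp Γ) (nFix (Sp * Tp) Γ) = true) (N : ℕ)
    (hN : (Finset.univ.filter (fun k : Fin 28 => c (fixB (tb (rp k).2) (rp k).1.length)
      (fixB (tb (rp k).1) (rp k).1.length) = true)).card = N) :
    countClasses P = N := by
  rw [← hN]
  apply count_general P (fun Γ h => ((hP Γ).mp h).1)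
  · intro H K h hK
    rw [hP] at hK ⊢
    rw [conj_nFix h, conj_nFix h]
    exact ⟨base_conj h hK.1, hK.2⟩
  · intro k
    rw [hP, (Gam_nFix k).1, (Gam_nFix k).2]
    exact ⟨fun h => h.2, fun h => ⟨Gam_base k, h⟩⟩

/-- There are exactly 28 conjugacy classes of genus-zero finite-index subgroups `Γ` of
`PSL(2,ℤ)` with `n + 3e₂ + 2e₃ = 12`; among them exactly 6 are torsion free, 14 have
`e₂ > 0`, 4 have `e₂ = 0, e₃ = 1`, 3 have `e₂ = 0, e₃ = 2`, and 1 has `e₂ = 0, e₃ = 3`. -/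
theorem count_K12 :
    countClasses (fun Γ => Γ.index ≠ 0 ∧ GenusZero Γ ∧ tfIdx Γ = 12) = 28 ∧
    countClasses (fun Γ => Γ.index ≠ 0 ∧ GenusZero Γ ∧ tfIdx Γ = 12 ∧ TorsionFree Γ) = 6 ∧
    countClasses (fun Γ => Γ.index ≠ 0 ∧ GenusZero Γ ∧ tfIdx Γ = 12 ∧ 0 < nFix Sp Γ) = 14 ∧
    countClasses (fun Γ => Γ.index ≠ 0 ∧ GenusZero Γ ∧ tfIdx Γ = 12 ∧
      nFix Sp Γ = 0 ∧ nFix (Sp * Tp) Γ = 1) = 4 ∧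
    countClasses (fun Γ => Γ.index ≠ 0 ∧ GenusZero Γ ∧ tfIdx Γ = 12 ∧
      nFix Sp Γ = 0 ∧ nFix (Sp * Tp) Γ = 2) = 3 ∧
    countClasses (fun Γ => Γ.index ≠ 0 ∧ GenusZero Γ ∧ tfIdx Γ = 12 ∧
      nFix Sp Γ = 0 ∧ nFix (Sp * Tp) Γ = 3) = 1 := by
  refine ⟨?_, ?_, ?_, ?_, ?_, ?_⟩
  · refine count_fix _ (fun _ _ => true) (fun Γ => by simp) _ (by decide +kernel)
  · refine count_fix _ (fun a b => a == 0 && b == 0) (fun Γ => ?_) _ (by decide +kernel)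
    constructor
    · rintro ⟨h1, h2, h3, h4⟩
      exact ⟨⟨h1, h2, h3⟩, by simpa using (torsionFree_iff Γ h1).mp h4⟩
    · rintro ⟨⟨h1, h2, h3⟩, h4⟩
      exact ⟨h1, h2, h3, (torsionFree_iff Γ h1).mpr (by simpa using h4)⟩
  · refine count_fix _ (fun a _ => Nat.blt 0 a) (fun Γ => ?_) _ (by decide +kernel)
    simp only [Nat.blt_eq, and_assoc]
  · refine count_fix _ (fun a b => a == 0 && b == 1) (fun Γ => ?_) _ (by decide +kernel)
    simp only [Bool.and_eq_true, beq_iff_eq, and_assoc]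
  · refine count_fix _ (fun a b => a == 0 && b == 2) (fun Γ => ?_) _ (by decide +kernel)
    simp only [Bool.and_eq_true, beq_iff_eq, and_assoc]
  · refine count_fix _ (fun a b => a == 0 && b == 3) (fun Γ => ?_) _ (by decide +kernel)
    simp only [Bool.and_eq_true, beq_iff_eq, and_assoc]
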